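/- arXiv:1705.10239 — 2 statements merged into one kernel-verified Lean document; each statement's English description precedes it below -/
import Mathlib

section
/- Let G = (V, E) be a tree rooted at a vertex r, and for v ∈ V let D(v) denote the set of descendants of v (including v). Let u : V → ℚ≥0 be an additive set function, let q ∈ ℚ, and let v ∈ V satisfy u(D(w)) < q for every child w of v. If V admits a partition into k ≥ 2 nonempty parts, each inducing a connected subgraph of G and each of u-value at least q, then V ∖ D(v) admits a partition into k − 1 nonempty parts, each inducing a connected subgraph of G and each of u-value at least q. -/
/-- The total utility of a set of items under an additive utility function `u`. -/
noncomputable def setVal {V : Type*} (u : V → ℚ) (X : Set V) : ℚ := ∑ᶠ x ∈ X, u x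

/-- A set of items induces a connected subgraph of `G`. -/
def ConnOn {V : Type*} (G : SimpleGraph V) (X : Set V) : Prop := (G.induce X).Connected

/-- A (possibly empty) bundle is connected in `G`. -/
def PreconnOn {V : Type*} (G : SimpleGraph V) (X : Set V) : Prop := (G.induce X).Preconnected

/-- An allocation is valid if every bundle is connected in `G` and bundles are
pairwise disjoint. -/
def ValidAlloc {V N : Type*} (G : SimpleGraph V) (π : N → Set V) : Prop :=
  (∀ i, PreconnOn G (π i)) ∧ ∀ i j, i ≠ j → Disjoint (π i) (π j)

/-- A partition of the whole vertex set into `n` nonempty parts, each inducing a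
connected subgraph of `G`. -/
def IsConnPartition {V : Type*} {n : ℕ} (G : SimpleGraph V) (P : Fin n → Set V) : Prop :=
  (∀ j, (P j).Nonempty) ∧ (∀ j, ConnOn G (P j)) ∧
    (∀ j k, j ≠ k → Disjoint (P j) (P k)) ∧ (⋃ j, P j) = Set.univ

/-- In a tree rooted at `r`, the descendants of `v` (including `v` itself):
those vertices `x` such that `v` lies on the unique path from `r` to `x`. -/
def descendants {V : Type*} (G : SimpleGraph V) (r v : V) : Set V :=
  {x | G.dist r x = G.dist r v + G.dist v x}

/-- In a tree rooted at `r`, `w` is a child of `v` if it is a neighbor of `v`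
that is farther from the root. -/
def IsChild {V : Type*} (G : SimpleGraph V) (r v w : V) : Prop :=
  G.Adj v w ∧ G.dist r w = G.dist r v + 1

/-!
Only one part contains `v`. Any other part meeting `D(v)` would be trapped in `D(w)` for some child
`w` of `v`, since `v` is the only exit from `D(w)`, and its value would be below `q`. Hence `D(v)`
lies inside the part `A` that contains `v`.

Geodesics from `r` to vertices outside `D(v)` stay outside `D(v)`, so `V ∖ D(v)` is connected. In a
tree, connected vertex sets are closed under intersection, so the leftover `A ∖ D(v)` is connected
too. If it is nonempty, connectedness of `V ∖ D(v)` provides an edge from it to another part, which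
absorbs it.
-/

section Connectivity

variable {V : Type*} {G : SimpleGraph V}

lemma dist_add_dist_of_mem_support {x y z : V} {p : G.Walk x y} (hp : p.length = G.dist x y)
    (hz : z ∈ p.support) : G.dist x z + G.dist z y = G.dist x y := by
  classical
  rw [← hp, ← SimpleGraph.length_eq_dist_of_subwalk hp (p.isSubwalk_takeUntil hz),
    ← SimpleGraph.length_eq_dist_of_subwalk hp (p.isSubwalk_dropUntil hz),
    ← SimpleGraph.Walk.length_append, p.take_spec hz]

lemma preconnOn_of_forall_mem_of_dist_add_dist_eq (hG : G.Connected) {S : Set V} (c : V)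
    (hS : ∀ x ∈ S, ∀ z, G.dist c z + G.dist z x = G.dist c x → z ∈ S) : PreconnOn G S := by
  rcases S.eq_empty_or_nonempty with rfl | ⟨s, hs⟩
  · exact fun x => x.2.elim
  have hc : c ∈ S := hS s hs c (by simp)
  have reachable_center (x : S) : (G.induce S).Reachable ⟨c, hc⟩ x := by
    obtain ⟨p, hp⟩ := hG.exists_walk_length_eq_dist c x
    exact ⟨p.induce S fun z hz => hS x x.2 z (dist_add_dist_of_mem_support hp hz)⟩
  exact fun x y => (reachable_center x).symm.trans (reachable_center y)

lemma PreconnOn.exists_isPath_support_subset {X : Set V} (hX : PreconnOn G X) {x y : V}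
    (hx : x ∈ X) (hy : y ∈ X) : ∃ p : G.Walk x y, p.IsPath ∧ ∀ z ∈ p.support, z ∈ X := by
  obtain ⟨p, hp⟩ := hX.exists_isPath ⟨x, hx⟩ ⟨y, hy⟩
  let inclusion := (SimpleGraph.Embedding.induce (G := G) X).toHom
  refine ⟨p.map inclusion, hp.map Subtype.val_injective, fun z hz => ?_⟩
  obtain ⟨z', -, rfl⟩ := List.mem_map.1 (p.support_map inclusion ▸ hz)
  exact z'.2

lemma PreconnOn.mem_of_mem_support (hG : G.IsAcyclic) {X : Set V} (hX : PreconnOn G X) {x y z : V}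
    (hx : x ∈ X) (hy : y ∈ X) {p : G.Walk x y} (hp : p.IsPath) (hz : z ∈ p.support) : z ∈ X := by
  obtain ⟨q, hq, hqX⟩ := hX.exists_isPath_support_subset hx hy
  have hpq : p = q :=
    congrArg Subtype.val ((hG.subsingleton_path x y).elim ⟨p, hp⟩ ⟨q, hq⟩)
  exact hqX z (hpq ▸ hz)

lemma PreconnOn.inter (hG : G.IsAcyclic) {X Y : Set V} (hX : PreconnOn G X)
    (hY : PreconnOn G Y) : PreconnOn G (X ∩ Y) := by
  rintro ⟨x, hx⟩ ⟨y, hy⟩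
  obtain ⟨p, hp, hpX⟩ := hX.exists_isPath_support_subset hx.1 hy.1
  exact ⟨p.induce (X ∩ Y) fun z hz => ⟨hpX z hz, hY.mem_of_mem_support hG hx.2 hy.2 hp hz⟩⟩

-- A path in `X` from `x` to a common vertex, extended back to `y`, would have to stay in `Y`.
lemma PreconnOn.disjoint_of_adj (hG : G.IsAcyclic) {X Y : Set V} (hX : PreconnOn G X)
    (hY : PreconnOn G Y) {x y : V} (hxy : G.Adj x y) (hx : x ∈ X) (hy : y ∈ Y) (hxY : x ∉ Y)
    (hyX : y ∉ X) : Disjoint X Y := by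
  refine Set.disjoint_left.2 fun z hzX hzY => hxY ?_
  obtain ⟨p, hp, hpX⟩ := hX.exists_isPath_support_subset hx hzX
  have hpath : (p.cons hxy.symm).IsPath := hp.cons fun hyp => hyX (hpX y hyp)
  exact hY.mem_of_mem_support hG hy hzY hpath (by simp)

lemma PreconnOn.exists_adj_of_union {X Y : Set V} (h : PreconnOn G (X ∪ Y)) (hXY : Disjoint X Y)
    (hX : X.Nonempty) (hY : Y.Nonempty) : ∃ x ∈ X, ∃ y ∈ Y, G.Adj x y := by
  obtain ⟨x, hx⟩ := hX
  obtain ⟨y, hy⟩ := hY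
  obtain ⟨p⟩ := h ⟨x, .inl hx⟩ ⟨y, .inr hy⟩
  obtain ⟨d, -, hd₁, hd₂⟩ :=
    p.exists_boundary_dart (Subtype.val ⁻¹' X) hx (Set.disjoint_right.1 hXY hy)
  exact ⟨d.fst, hd₁, d.snd, d.snd.2.resolve_left hd₂, d.adj⟩

end Connectivity

section Descendants

variable {V : Type*} {G : SimpleGraph V} {r v w : V}

lemma mem_descendants {x : V} :
    x ∈ descendants G r v ↔ G.dist r x = G.dist r v + G.dist v x :=
  Iff.rfl

lemma preconnOn_descendants (hG : G.Connected) : PreconnOn G (descendants G r v) := by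
  refine preconnOn_of_forall_mem_of_dist_add_dist_eq hG v fun x hx z hz => ?_
  have hrx : G.dist r x ≤ G.dist r z + G.dist z x := hG.dist_triangle
  have hrz : G.dist r z ≤ G.dist r v + G.dist v z := hG.dist_triangle
  rw [mem_descendants] at hx ⊢
  omega

lemma preconnOn_compl_descendants (hG : G.Connected) : PreconnOn G (descendants G r v)ᶜ := by
  refine preconnOn_of_forall_mem_of_dist_add_dist_eq hG r fun x hx z hz hzv => hx ?_
  have hrx : G.dist r x ≤ G.dist r v + G.dist v x := hG.dist_triangle
  have hvx : G.dist v x ≤ G.dist v z + G.dist z x := hG.dist_triangle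
  rw [mem_descendants] at hzv ⊢
  omega

lemma PreconnOn.sdiff_descendants (hG : G.IsTree) {X : Set V} (hX : PreconnOn G X) :
    PreconnOn G (X \ descendants G r v) :=
  hX.inter hG.isAcyclic (preconnOn_compl_descendants hG.connected)

lemma exists_isChild_mem_descendants (hG : G.Connected) {x : V} (hx : x ∈ descendants G r v)
    (hxv : x ≠ v) : ∃ w, IsChild G r v w ∧ x ∈ descendants G r w := by
  obtain ⟨p, hp⟩ := hG.exists_walk_length_eq_dist v x
  obtain ⟨w, hvw, p', rfl⟩ := p.exists_eq_cons_of_ne hxv.symm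
  have hp' : G.dist w x ≤ p'.length := G.dist_le p'
  have hrw : G.dist r w ≤ G.dist r v + G.dist v w := hG.dist_triangle
  have hrx : G.dist r x ≤ G.dist r w + G.dist w x := hG.dist_triangle
  rw [SimpleGraph.dist_eq_one_iff_adj.2 hvw] at hrw
  rw [SimpleGraph.Walk.length_cons] at hp
  rw [mem_descendants] at hx
  exact ⟨w, ⟨hvw, by omega⟩, mem_descendants.2 (by omega)⟩

lemma IsChild.notMem_descendants (hw : IsChild G r v w) : v ∉ descendants G r w := by
  have hdist := hw.2
  rw [mem_descendants]
  omega

lemma PreconnOn.subset_descendants_of_isChild (hG : G.IsTree) {X : Set V} (hX : PreconnOn G X)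
    (hvX : v ∉ X) (hw : IsChild G r v w) (hmeet : (X ∩ descendants G r w).Nonempty) :
    X ⊆ descendants G r w := by
  have hunion : PreconnOn G (X ∪ descendants G r w) :=
    (SimpleGraph.induce_union_connected hX (preconnOn_descendants hG.connected) hmeet).preconnected
  have hw_mem : w ∈ descendants G r w := mem_descendants.2 (by simp)
  have hdisj : Disjoint (X ∪ descendants G r w) (descendants G r w)ᶜ :=
    hunion.disjoint_of_adj hG.isAcyclic (preconnOn_compl_descendants hG.connected) hw.1.symm
      (.inr hw_mem) hw.notMem_descendants (not_not.2 hw_mem)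
      (not_or.2 ⟨hvX, hw.notMem_descendants⟩)
  exact Set.subset_union_left.trans (Set.disjoint_compl_right_iff_subset.1 hdisj)

lemma PreconnOn.exists_isChild_subset_descendants (hG : G.IsTree) {X : Set V}
    (hX : PreconnOn G X) (hvX : v ∉ X) (hmeet : (X ∩ descendants G r v).Nonempty) :
    ∃ w, IsChild G r v w ∧ X ⊆ descendants G r w := by
  obtain ⟨x, hxX, hxv⟩ := hmeet
  obtain ⟨w, hw, hxw⟩ :=
    exists_isChild_mem_descendants hG.connected hxv (ne_of_mem_of_not_mem hxX hvX)
  exact ⟨w, hw, hX.subset_descendants_of_isChild hG hvX hw ⟨x, hxX, hxw⟩⟩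

end Descendants

/-- A partition of the vertex set `S` into nonempty connected parts, over any index type. It
extends `IsConnPartition`, the case `S = Set.univ`, to the intermediate sets of the argument;
nonemptiness of the parts is contained in `ConnOn`. -/
structure IsConnPartitionOn {V ι : Type*} (G : SimpleGraph V) (S : Set V) (P : ι → Set V) :
    Prop where
  connOn : ∀ i, ConnOn G (P i)
  pairwise_disjoint : Pairwise fun i j => Disjoint (P i) (P j)
  iUnion_eq : ⋃ i, P i = S

lemma IsConnPartition.isConnPartitionOn_univ {V : Type*} {n : ℕ} {G : SimpleGraph V}
    {P : Fin n → Set V} (hP : IsConnPartition G P) : IsConnPartitionOn G Set.univ P :=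
  ⟨hP.2.1, fun i j => hP.2.2.1 i j, hP.2.2.2⟩

namespace IsConnPartitionOn

variable {V ι : Type*} {G : SimpleGraph V} {S R : Set V} {P : ι → Set V}

lemma nonempty (hP : IsConnPartitionOn G S P) (i : ι) : (P i).Nonempty :=
  Set.nonempty_coe_sort.1 (hP.connOn i).nonempty

lemma exists_mem (hP : IsConnPartitionOn G S P) {x : V} (hx : x ∈ S) : ∃ i, x ∈ P i :=
  Set.mem_iUnion.1 (hP.iUnion_eq.symm ▸ hx)

lemma subset (hP : IsConnPartitionOn G S P) (i : ι) : P i ⊆ S :=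
  hP.iUnion_eq ▸ Set.subset_iUnion P i

lemma subset_of_forall_ne_disjoint (hP : IsConnPartitionOn G S P) (hRS : R ⊆ S) {i : ι}
    (hR : ∀ j ≠ i, Disjoint (P j) R) : R ⊆ P i := by
  intro x hx
  obtain ⟨j, hj⟩ := hP.exists_mem (hRS hx)
  obtain rfl : j = i := by_contra fun hji => Set.disjoint_left.1 (hR j hji) hj hx
  exact hj

lemma comp_succAbove {n : ℕ} {P : Fin (n + 1) → Set V} (hP : IsConnPartitionOn G S P)
    (j : Fin (n + 1)) : IsConnPartitionOn G (S \ P j) (P ∘ j.succAbove) where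
  connOn i := hP.connOn _
  pairwise_disjoint := hP.pairwise_disjoint.comp_of_injective Fin.succAbove_right_injective
  iUnion_eq := by
    have hdisj : Disjoint (P j) (⋃ i, P (j.succAbove i)) :=
      Set.disjoint_iUnion_right.2 fun i => hP.pairwise_disjoint (Fin.ne_succAbove j i)
    have hS : S = P j ∪ ⋃ i, P (j.succAbove i) := by
      rw [← hP.iUnion_eq]
      ext x
      simp only [Set.mem_iUnion, Set.mem_union, Fin.exists_iff_succAbove j]
    rw [hS]
    exact (Set.union_sdiff_cancel_left hdisj.le_bot).symm

lemma update_union [DecidableEq ι] (hP : IsConnPartitionOn G S P) (hSR : Disjoint S R) {i : ι}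
    (hi : ConnOn G (P i ∪ R)) :
    IsConnPartitionOn G (S ∪ R) (Function.update P i (P i ∪ R)) where
  connOn := (Function.forall_update_iff P fun _ X => ConnOn G X).2 ⟨hi, fun j _ => hP.connOn j⟩
  pairwise_disjoint j k hjk := by
    have hdisj := hP.pairwise_disjoint hjk
    have hR (l : ι) : Disjoint (P l) R := hSR.mono_left (hP.subset l)
    rcases eq_or_ne j i with rfl | hj
    · simpa [hjk.symm] using ⟨hdisj, (hR k).symm⟩
    · rcases eq_or_ne k i with rfl | hk
      · simpa [hj] using ⟨hdisj, hR j⟩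
      · simpa [hj, hk] using hdisj
  iUnion_eq := by
    rw [← hP.iUnion_eq]
    ext x
    simp only [Set.mem_iUnion, Set.mem_union, Function.update_apply]
    grind

lemma exists_isConnPartitionOn_union [Nonempty ι] (hP : IsConnPartitionOn G S P)
    (hSR : Disjoint S R) (hR : PreconnOn G R) (hunion : PreconnOn G (S ∪ R)) :
    ∃ Q : ι → Set V, IsConnPartitionOn G (S ∪ R) Q ∧ ∀ i, P i ⊆ Q i := by
  classical
  rcases R.eq_empty_or_nonempty with rfl | hR_nonempty
  · exact ⟨P, by rwa [Set.union_empty], fun _ => subset_rfl⟩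
  have hS : S.Nonempty := (hP.nonempty (Classical.arbitrary ι)).mono (hP.subset _)
  obtain ⟨s, hs, t, ht, hst⟩ := hunion.exists_adj_of_union hSR hS hR_nonempty
  obtain ⟨i, hi⟩ := hP.exists_mem hs
  have hconn : ConnOn G (P i ∪ R) :=
    SimpleGraph.connected_induce_union (hP.connOn i).preconnected hR hi ht hst
  refine ⟨_, hP.update_union hSR hconn, ?_⟩
  exact le_update_iff.2 ⟨Set.subset_union_left, fun _ _ => le_rfl⟩

end IsConnPartitionOn

lemma monotone_setVal {V : Type*} {u : V → ℚ} (hnn : ∀ x, 0 ≤ u x) (hfin : u.HasFiniteSupport) :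
    Monotone (setVal u) := by
  intro X Y hXY
  simp only [setVal, finsum_mem_def]
  have hindicator (Z : Set V) : (Z.indicator u).HasFiniteSupport := hfin.subset (by simp)
  exact finsum_le_finsum' (hindicator X) (hindicator Y)
    (Set.indicator_le_indicator_of_subset hXY hnn)

lemma disjoint_descendants_of_le {V α : Type*} [Preorder α] {G : SimpleGraph V} (hG : G.IsTree)
    {r v : V} {f : Set V → α} (hf : Monotone f) {q : α}
    (hv : ∀ w, IsChild G r v w → f (descendants G r w) < q) {X : Set V} (hX : PreconnOn G X)
    (hvX : v ∉ X) (hq : q ≤ f X) : Disjoint X (descendants G r v) := by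
  refine Set.disjoint_iff_inter_eq_empty.2 (Set.not_nonempty_iff_eq_empty.1 fun hmeet => ?_)
  obtain ⟨w, hw, hsub⟩ := hX.exists_isChild_subset_descendants hG hvX hmeet
  exact lt_irrefl q ((hq.trans (hf hsub)).trans_lt (hv w hw))

theorem partition_after_removing_subtree_general {V α : Type*} [Preorder α]
    (G : SimpleGraph V) (hG : G.IsTree) (r : V) (f : Set V → α) (hf : Monotone f) (q : α) (v : V)
    (hv : ∀ w, IsChild G r v w → f (descendants G r w) < q) (k : ℕ) (hk : 2 ≤ k)
    (P : Fin k → Set V) (hP : IsConnPartition G P) (hval : ∀ j, q ≤ f (P j)) :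
    ∃ Q : Fin (k - 1) → Set V,
      IsConnPartitionOn G (Set.univ \ descendants G r v) Q ∧ ∀ j, q ≤ f (Q j) := by
  obtain ⟨n, rfl⟩ := Nat.exists_eq_add_of_le' hk
  have hP' := hP.isConnPartitionOn_univ
  obtain ⟨j₀, hj₀⟩ := hP'.exists_mem (Set.mem_univ v)
  have hother : ∀ j ≠ j₀, Disjoint (P j) (descendants G r v) := fun j hj =>
    disjoint_descendants_of_le hG hf hv (hP'.connOn j).preconnected
      (Set.disjoint_right.1 (hP'.pairwise_disjoint hj) hj₀) (hval j)
  have hsub : descendants G r v ⊆ P j₀ :=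
    hP'.subset_of_forall_ne_disjoint (Set.subset_univ _) hother
  have hcover : Set.univ \ P j₀ ∪ P j₀ \ descendants G r v = Set.univ \ descendants G r v :=
    Set.sdiff_union_sdiff_cancel (Set.subset_univ _) hsub
  have hunion : PreconnOn G (Set.univ \ P j₀ ∪ P j₀ \ descendants G r v) := by
    rw [hcover, ← Set.compl_eq_univ_sdiff]
    exact preconnOn_compl_descendants hG.connected
  obtain ⟨Q, hQ, hPQ⟩ := (hP'.comp_succAbove j₀).exists_isConnPartitionOn_union
    (Set.disjoint_sdiff_left.mono_right Set.sdiff_subset)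
    (PreconnOn.sdiff_descendants hG (hP'.connOn j₀).preconnected) hunion
  exact ⟨Q, hcover ▸ hQ, fun j => (hval _).trans (hf (hPQ j))⟩

/-- If every child subtree of `v` has `u`-value less than `q`, and the vertex set of the
tree admits a partition into `k ≥ 2` nonempty connected parts each of `u`-value at least
`q`, then `V ∖ D(v)` admits such a partition into `k - 1` parts. -/
theorem partition_after_removing_subtree {V : Type*} [Fintype V]
    (G : SimpleGraph V) (hG : G.IsTree) (r : V)
    (u : V → ℚ) (hnn : ∀ x, 0 ≤ u x) (q : ℚ) (v : V)
    (hv : ∀ w, IsChild G r v w → setVal u (descendants G r w) < q)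
    (k : ℕ) (hk : 2 ≤ k)
    (P : Fin k → Set V) (hP : IsConnPartition G P)
    (hval : ∀ j, q ≤ setVal u (P j)) :
    ∃ Q : Fin (k - 1) → Set V,
      (∀ j, (Q j).Nonempty) ∧ (∀ j, ConnOn G (Q j)) ∧
        (∀ j l, j ≠ l → Disjoint (Q j) (Q l)) ∧
        (⋃ j, Q j) = Set.univ \ descendants G r v ∧
        ∀ j, q ≤ setVal u (Q j) := by
  obtain ⟨Q, hQ, hQval⟩ := partition_after_removing_subtree_general G hG r (setVal u)
    (monotone_setVal hnn (Set.toFinite _)) q v hv k hk P hP hval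
  exact ⟨Q, hQ.nonempty, hQ.connOn, fun _ _ h => hQ.pairwise_disjoint h, hQ.iUnion_eq, hQval⟩
end

section
/- Let I = (G, N, 𝒰) be a CFD instance with n players in which G is a star: there is a center vertex c and every other vertex of V is a leaf adjacent exactly to c. Then I admits a proportional valid allocation if and only if there exist a player i ∈ N and an injective map μ : N ∖ {i} → V ∖ {c} such that u_j(μ(j)) ≥ 1/n for every j ∈ N ∖ {i} and u_i(V ∖ μ(N ∖ {i})) ≥ 1/n. -/
section SetVal

variable {V : Type*} {u : V → ℚ} {X Y : Set V}

theorem setVal_singleton (u : V → ℚ) (v : V) : setVal u {v} = u v :=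
  finsum_mem_singleton

theorem setVal_mono (hu : ∀ v, 0 ≤ u v) (hY : (Y ∩ u.support).Finite) (hXY : X ⊆ Y) :
    setVal u X ≤ setVal u Y := by
  simp only [setVal, finsum_mem_def]
  have hfinY : (Y.indicator u).HasFiniteSupport := by
    rwa [Function.HasFiniteSupport, Set.support_indicator]
  have hfinX : (X.indicator u).HasFiniteSupport := by
    rw [Function.HasFiniteSupport, Set.support_indicator]
    exact hY.subset (Set.inter_subset_inter_left _ hXY)
  exact finsum_le_finsum' hfinX hfinY (Set.indicator_le_indicator_of_subset hXY hu)

theorem nonempty_of_setVal_ne_zero (h : setVal u X ≠ 0) : X.Nonempty := by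
  obtain ⟨v, hv, -⟩ := exists_ne_zero_of_finsum_mem_ne_zero h
  exact ⟨v, hv⟩

end SetVal

section PreconnOn

variable {V : Type*} {G : SimpleGraph V} {X : Set V} {c : V}

theorem preconnOn_of_subsingleton (hX : X.Subsingleton) : PreconnOn G X :=
  have := hX.coe_sort
  .of_subsingleton

theorem preconnOn_of_isUniversal_of_mem (hc : G.IsUniversal c) (hcX : c ∈ X) : PreconnOn G X :=
  have huniv : (G.induce X).IsUniversal ⟨c, hcX⟩ := fun _ hne => hc (Subtype.coe_ne_coe.2 hne)
  (SimpleGraph.Connected.of_isUniversal huniv).preconnected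

theorem PreconnOn.subsingleton_of_isIndepSet (hX : PreconnOn G X) (hindep : G.IsIndepSet X) :
    X.Subsingleton := by
  have hbot : G.induce X = ⊥ := by
    ext a b
    simpa using fun hab : G.Adj a b => hindep a.2 b.2 hab.ne hab
  rw [PreconnOn, hbot, SimpleGraph.preconnected_bot_iff_subsingleton] at hX
  exact (Set.subsingleton_coe X).1 hX

end PreconnOn

section Star

variable {V : Type*} {c : V}

theorem eq_starGraph_iff {G : SimpleGraph V} :
    G = SimpleGraph.starGraph c ↔ ∀ x y, G.Adj x y ↔ (x = c ∧ y ≠ c) ∨ (y = c ∧ x ≠ c) := by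
  simp only [SimpleGraph.ext_iff, funext_iff, eq_iff_iff, SimpleGraph.starGraph_adj]
  grind

theorem isIndepSet_starGraph_of_notMem {X : Set V} (hc : c ∉ X) :
    (SimpleGraph.starGraph c).IsIndepSet X := by
  intro x hx y hy _ hadj
  rcases (SimpleGraph.starGraph_adj.1 hadj).2 with rfl | rfl
  exacts [hc hx, hc hy]

end Star

section PairwiseDisjoint

open Function (onFun Injective)

variable {V N : Type*} {π : N → Set V} {μ : N → V}

theorem exists_forall_ne_notMem_of_pairwise_disjoint [Nonempty N]
    (hπ : Pairwise (onFun Disjoint π)) (v : V) :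
    ∃ i, ∀ j, j ≠ i → v ∉ π j := by
  by_cases howned : ∃ i, v ∈ π i
  · obtain ⟨i, hi⟩ := howned
    exact ⟨i, fun j hji hj => Set.disjoint_left.1 (hπ hji) hj hi⟩
  · exact ⟨Classical.arbitrary N, fun j _ hj => howned ⟨j, hj⟩⟩

theorem injective_of_pairwise_disjoint_of_mem
    (hπ : Pairwise (onFun Disjoint π)) (hμ : ∀ j, μ j ∈ π j) :
    Injective μ := by
  intro j k hjk
  by_contra hne
  exact Set.disjoint_left.1 (hπ hne) (hμ j) (hjk ▸ hμ k)

theorem subset_univ_diff_image_of_pairwise_disjoint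
    (hπ : Pairwise (onFun Disjoint π)) (hμ : ∀ j, μ j ∈ π j) (i : N) :
    π i ⊆ Set.univ \ μ '' {j | j ≠ i} := by
  refine fun x hx => ⟨Set.mem_univ x, ?_⟩
  rintro ⟨j, hji, rfl⟩
  exact Set.disjoint_left.1 (hπ hji) (hμ j) hx

end PairwiseDisjoint

section RestAlloc

variable {V N : Type*} [DecidableEq N] {G : SimpleGraph V} {c : V} {i : N} {μ : N → V}

/-- The allocation giving each player `j ≠ i` the single item `μ j` and player `i` all remaining
items; `μ i` is ignored. -/
def restAlloc (i : N) (μ : N → V) : N → Set V :=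
  Function.update (fun j => {μ j}) i (Set.univ \ μ '' {j | j ≠ i})

theorem pairwise_disjoint_restAlloc (hμ : Set.InjOn μ {j | j ≠ i}) :
    Pairwise (Function.onFun Disjoint (restAlloc i μ)) := by
  have hrest : ∀ j, j ≠ i → Disjoint (restAlloc i μ i) (restAlloc i μ j) := by
    intro j hj
    simpa [restAlloc, hj] using ⟨j, hj, rfl⟩
  intro j k hjk
  rcases eq_or_ne j i with rfl | hj
  · exact hrest k hjk.symm
  rcases eq_or_ne k i with rfl | hk
  · exact (hrest j hj).symm
  · simpa [Function.onFun, restAlloc, hj, hk] using hμ.ne hj hk hjk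

theorem validAlloc_restAlloc (hc : G.IsUniversal c) (hμc : ∀ j, j ≠ i → μ j ≠ c)
    (hμ : Set.InjOn μ {j | j ≠ i}) : ValidAlloc G (restAlloc i μ) := by
  refine ⟨?_, fun _ _ hjk => pairwise_disjoint_restAlloc hμ hjk⟩
  refine (Function.forall_update_iff _ fun _ X => PreconnOn G X).2
    ⟨preconnOn_of_isUniversal_of_mem hc ⟨Set.mem_univ c, ?_⟩,
      fun _ _ => preconnOn_of_subsingleton Set.subsingleton_singleton⟩
  rintro ⟨j, hj, hjc⟩
  exact hμc j hj hjc

theorem forall_le_setVal_restAlloc_iff {u : N → V → ℚ} {t : N → ℚ} :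
    (∀ j, t j ≤ setVal (u j) (restAlloc i μ j)) ↔
      (∀ j, j ≠ i → t j ≤ u j (μ j)) ∧
        t i ≤ setVal (u i) (Set.univ \ μ '' {j | j ≠ i}) := by
  rw [restAlloc, Function.forall_update_iff _ fun j X => t j ≤ setVal (u j) X, and_comm]
  simp only [setVal_singleton]

end RestAlloc

theorem proportional_on_star_iff_general {V N : Type*} [Nonempty N] (c : V) (u : N → V → ℚ)
    (hnn : ∀ i v, 0 ≤ u i v) (hfin : ∀ i, (u i).support.Finite) (t : N → ℚ) (ht : ∀ i, 0 < t i) :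
    (∃ π : N → Set V, ValidAlloc (SimpleGraph.starGraph c) π ∧
        ∀ i, t i ≤ setVal (u i) (π i)) ↔
      (∃ (i : N) (μ : N → V),
        (∀ j, j ≠ i → μ j ≠ c) ∧
        Set.InjOn μ {j | j ≠ i} ∧
        (∀ j, j ≠ i → t j ≤ u j (μ j)) ∧
        t i ≤ setVal (u i) (Set.univ \ μ '' {j | j ≠ i})) := by
  classical
  constructor
  · rintro ⟨π, ⟨hconn, hdisj⟩, hprop⟩
    replace hdisj : Pairwise (Function.onFun Disjoint π) := fun j k => hdisj j k
    obtain ⟨i, hi⟩ := exists_forall_ne_notMem_of_pairwise_disjoint hdisj c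
    choose μ hμ using fun j =>
      nonempty_of_setVal_ne_zero ((ht j).trans_le (hprop j)).ne'
    have hleaf : ∀ j, j ≠ i → π j = {μ j} := fun j hj =>
      ((hconn j).subsingleton_of_isIndepSet
        (isIndepSet_starGraph_of_notMem (hi j hj))).eq_singleton_of_mem (hμ j)
    refine ⟨i, μ, fun j hj => ne_of_mem_of_not_mem (hμ j) (hi j hj),
      (injective_of_pairwise_disjoint_of_mem hdisj hμ).injOn, fun j hj => ?_, ?_⟩
    · simpa only [hleaf j hj, setVal_singleton] using hprop j
    · exact (hprop i).trans <| setVal_mono (hnn i) ((hfin i).inter_of_right _)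
        (subset_univ_diff_image_of_pairwise_disjoint hdisj hμ i)
  · rintro ⟨i, μ, hμc, hinj, hvals⟩
    exact ⟨restAlloc i μ, validAlloc_restAlloc SimpleGraph.isUniversal_starGraph_self hμc hinj,
      forall_le_setVal_restAlloc_iff.2 hvals⟩

/-- For a CFD instance on a star with center `c`, a proportional valid allocation exists
iff some player `i` and injection `μ` from the other players to the leaves exist such that
every other player `j` values the leaf `μ j` at least `1/n` and `i` values the rest of the
items at least `1/n`. -/
theorem proportional_on_star_iff {V N : Type*} [Fintype V] [Fintype N] [Nonempty N]
    (G : SimpleGraph V) (c : V)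
    (hstar : ∀ x y, G.Adj x y ↔ (x = c ∧ y ≠ c) ∨ (y = c ∧ x ≠ c))
    (u : N → V → ℚ) (hnn : ∀ i v, 0 ≤ u i v) (hsum : ∀ i, ∑ v, u i v = 1) :
    (∃ π : N → Set V, ValidAlloc G π ∧
        ∀ i, 1 / (Fintype.card N : ℚ) ≤ setVal (u i) (π i)) ↔
      (∃ (i : N) (μ : N → V),
        (∀ j, j ≠ i → μ j ≠ c) ∧
        Set.InjOn μ {j | j ≠ i} ∧
        (∀ j, j ≠ i → 1 / (Fintype.card N : ℚ) ≤ u j (μ j)) ∧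
        1 / (Fintype.card N : ℚ) ≤ setVal (u i) (Set.univ \ μ '' {j | j ≠ i})) := by
  obtain rfl := eq_starGraph_iff.2 hstar
  exact proportional_on_star_iff_general c u hnn (fun _ => Set.toFinite _) _ fun _ => by positivity
end
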